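/- Let A = (a_{ij}) be an n×n real matrix with a_{i,i+1} > 0 for 1 ≤ i ≤ n−1, a_{i,i−2} > 0 for 3 ≤ i ≤ n, and all other entries zero. Then the characteristic polynomial of A has the form λ^k · P(λ³) where k ∈ {0,1,2} and P is a real polynomial all of whose roots are positive and simple. In particular, all nonzero eigenvalues of A are simple and have arguments of the form 2πk/3 with k ∈ {0,1,2}. -/

import Mathlib

open Polynomial

/-!
Write `y 0, y 1, …` for the characteristic polynomials of the leading principal submatrices. They
satisfy `y (m + 3) = λ y (m + 2) - b m y m` with `b m > 0`, so `y m = λ ^ (m % 3) P_m(λ³)`, and a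
sign induction shows that `P_m` has no root in `(-∞, 0]`.

For two arguments `s, t` the recurrence yields an identity of Christoffel–Darboux type,
`(s³ - t³) K_m(s, t) = s² y_{m+1}(s) y_m(t) - t² y_{m+1}(t) y_m(s)`, where `K_m` is a combination
with positive coefficients of the kernels `(s t) ^ j y_k(s) y_k(t)`, so that `K_m(z, conj z) > 0`
for `z ≠ 0`. If `y_m(z) = 0`, then `t = conj z` makes the right-hand side vanish and `z³` is real.
Differentiating in `s` at `s = z`, `t = conj z` then gives
`3 z² K_m(z, conj z) = -conj z² y_{m+1}(conj z) y_m'(z)`, hence `y_m'(z) ≠ 0`.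
-/

section BandSeq

variable {R S : Type*} [CommRing R] [CommRing S]

/-- The solution of `y (m + 3) = x * y (m + 2) - b m * y m` starting with `1, x, x ^ 2`. Its terms
live in an arbitrary ring, so that numerical values and polynomials in `x` are both instances. -/
def bandSeq (b : ℕ → R) (x : R) : ℕ → R
  | 0 => 1
  | 1 => x
  | 2 => x ^ 2
  | m + 3 => x * bandSeq b x (m + 2) - b m * bandSeq b x m

theorem map_bandSeq (φ : R →+* S) (b : ℕ → R) (x : R) :
    ∀ m, φ (bandSeq b x m) = bandSeq (φ ∘ b) (φ x) m
  | 0 | 1 | 2 => by simp [bandSeq]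
  | m + 3 => by simp [bandSeq, map_bandSeq φ b x m, map_bandSeq φ b x (m + 2)]

/-- The solution of the recurrence at the indeterminate: for `b m = v m * u m * u (m + 1)` it is the
characteristic polynomial of `bandMatrix m u v`. -/
noncomputable def bandPoly (b : ℕ → R) (m : ℕ) : R[X] :=
  bandSeq (C ∘ b) X m

theorem bandPoly_succ (b : ℕ → R) (m : ℕ) :
    bandPoly b (m + 1) =
      X * bandPoly b m - if 2 ≤ m then C (b (m - 2)) * bandPoly b (m - 2) else 0 := by
  rcases m with _ | _ | m <;> simp [bandPoly, bandSeq, sq]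

theorem eval_bandPoly (b : ℕ → R) (x : R) (m : ℕ) : (bandPoly b m).eval x = bandSeq b x m := by
  have hb : eval x ∘ C ∘ b = b := by ext; simp
  simpa [bandPoly, hb] using map_bandSeq (evalRingHom x) (C ∘ b) X m

theorem map_bandPoly (φ : R →+* S) (b : ℕ → R) (m : ℕ) :
    (bandPoly b m).map φ = bandPoly (φ ∘ b) m := by
  have hb : map φ ∘ C ∘ b = C ∘ φ ∘ b := by ext; simp
  simpa [bandPoly, hb] using map_bandSeq (mapRingHom φ) (C ∘ b) X m

/-- The polynomial `P` in `bandPoly b m = X ^ (m % 3) * P.comp (X ^ 3)`. -/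
noncomputable def cubeReduced (b : ℕ → R) : ℕ → R[X]
  | 0 | 1 | 2 => 1
  | m + 3 => (if 3 ∣ m then X else 1) * cubeReduced b (m + 2) - C (b m) * cubeReduced b m

theorem bandPoly_eq_X_pow_mul_comp (b : ℕ → R) :
    ∀ m, bandPoly b m = X ^ (m % 3) * (cubeReduced b m).comp (X ^ 3)
  | 0 | 1 | 2 => by simp [bandPoly, bandSeq, cubeReduced]
  | m + 3 => by
    have h₀ := bandPoly_eq_X_pow_mul_comp b m
    have h₂ := bandPoly_eq_X_pow_mul_comp b (m + 2)
    have hrec : bandPoly b (m + 3) = X * bandPoly b (m + 2) - C (b m) * bandPoly b m :=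
      bandPoly_succ b (m + 2)
    rw [hrec, h₀, h₂, cubeReduced, Nat.add_mod_right]
    by_cases hm : 3 ∣ m
    · rw [show (m + 2) % 3 = 2 by omega, show m % 3 = 0 by omega]
      simp only [pow_zero, one_mul, hm, ↓reduceIte, sub_comp, mul_comp, X_comp, C_comp]
      ring
    · rw [show m % 3 = (m + 2) % 3 + 1 by omega]
      simp only [hm, ↓reduceIte, one_mul, sub_comp, mul_comp, C_comp]
      ring

theorem neg_one_pow_mul_eval_cubeReduced_pos [PartialOrder R] [IsStrictOrderedRing R] {b : ℕ → R}
    (hb : ∀ m, 0 < b m) {x : R} (hx : x ≤ 0) :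
    ∀ m, 0 < (-1) ^ (m / 3) * (cubeReduced b m).eval x
  | 0 | 1 | 2 => by simp [cubeReduced]
  | m + 3 => by
    have h₀ := mul_pos (hb m) (neg_one_pow_mul_eval_cubeReduced_pos hb hx m)
    have h₂ := neg_one_pow_mul_eval_cubeReduced_pos hb hx (m + 2)
    rw [Nat.add_div_right m three_pos, cubeReduced]
    by_cases hm : 3 ∣ m
    · rw [show (m + 2) / 3 = m / 3 by omega] at h₂
      refine (add_pos_of_nonneg_of_pos (mul_nonneg (neg_nonneg.2 hx) h₂.le) h₀).trans_eq ?_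
      simp only [hm, ↓reduceIte, eval_sub, eval_mul, eval_X, eval_C]
      ring
    · rw [show (m + 2) / 3 = m / 3 + 1 by omega] at h₂
      refine (add_pos h₂ h₀).trans_eq ?_
      simp only [hm, ↓reduceIte, one_mul, eval_sub, eval_mul, eval_C]
      ring

theorem pos_of_isRoot_cubeReduced [LinearOrder R] [IsStrictOrderedRing R] {b : ℕ → R}
    (hb : ∀ m, 0 < b m) {m : ℕ} {x : R} (hx : (cubeReduced b m).IsRoot x) : 0 < x := by
  by_contra! hx'
  simpa [hx.eq_zero] using neg_one_pow_mul_eval_cubeReduced_pos hb hx' m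

mutual

/-- The quotient of `t * y (m + 1) (s) * y m (t) - s * y (m + 1) (t) * y m (s)` by `s ^ 3 - t ^ 3`,
where `y` is `bandSeq b`, defined by a subtraction-free recurrence to make its positivity visible.
When `3 ∤ m + 1` it is, up to a power of `s * t`, the Bezoutian of `cubeReduced b (m + 1)` and
`cubeReduced b m` at `s ^ 3` and `t ^ 3`. -/
def bandBezoutian (b : ℕ → R) (s t : R) : ℕ → R
  | 0 | 1 => 0
  | 2 => b 0
  | m + 3 => b (m + 1) * (bandShiftedBezoutian b s t (m + 1) + b m * bandBezoutian b s t m)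

/-- The quotient of `s ^ 2 * y (m + 1) (s) * y m (t) - t ^ 2 * y (m + 1) (t) * y m (s)` by
`s ^ 3 - t ^ 3`, where `y` is `bandSeq b`, defined by a subtraction-free recurrence. When
`3 ∤ m + 1` it is, up to a power of `s * t`, the Bezoutian of `X * cubeReduced b (m + 1)` and
`cubeReduced b m` at `s ^ 3` and `t ^ 3`. -/
def bandShiftedBezoutian (b : ℕ → R) (s t : R) : ℕ → R
  | 0 => 1
  | 1 => s * t
  | 2 => (s * t) ^ 2
  | m + 3 => bandSeq b s (m + 3) * bandSeq b t (m + 3) +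
      b (m + 1) * (s * t * bandBezoutian b s t (m + 1) + b m * bandShiftedBezoutian b s t m)

end

theorem christoffel_darboux (b : ℕ → R) (s t : R) :
    ∀ m, (s ^ 3 - t ^ 3) * bandBezoutian b s t m =
        t * bandSeq b s (m + 1) * bandSeq b t m - s * bandSeq b t (m + 1) * bandSeq b s m ∧
      (s ^ 3 - t ^ 3) * bandShiftedBezoutian b s t m =
        s ^ 2 * bandSeq b s (m + 1) * bandSeq b t m - t ^ 2 * bandSeq b t (m + 1) * bandSeq b s m
  | 0 | 1 | 2 => by
    simp only [bandBezoutian, bandShiftedBezoutian, bandSeq]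
    constructor <;> ring
  | m + 3 => by
    obtain ⟨hA₀, hB₀⟩ := christoffel_darboux b s t m
    obtain ⟨hA₁, hB₁⟩ := christoffel_darboux b s t (m + 1)
    simp only [bandBezoutian, bandShiftedBezoutian, bandSeq] at *
    constructor
    · linear_combination b (m + 1) * hB₁ + b (m + 1) * b m * hA₀
    · linear_combination b (m + 1) * s * t * hA₁ + b (m + 1) * b m * hB₀

theorem map_bandBezoutian (φ : R →+* S) (b : ℕ → R) (s t : R) :
    ∀ m, φ (bandBezoutian b s t m) = bandBezoutian (φ ∘ b) (φ s) (φ t) m ∧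
      φ (bandShiftedBezoutian b s t m) = bandShiftedBezoutian (φ ∘ b) (φ s) (φ t) m
  | 0 | 1 | 2 => by simp [bandBezoutian, bandShiftedBezoutian]
  | m + 3 => by
    simp [bandBezoutian, bandShiftedBezoutian, map_bandSeq, map_bandBezoutian φ b s t m,
      map_bandBezoutian φ b s t (m + 1)]

theorem bandBezoutian_nonneg_and_bandShiftedBezoutian_pos [PartialOrder R] [IsStrictOrderedRing R]
    {b : ℕ → R} {s t : R} (hb : ∀ m, 0 < b m) (hst : 0 < s * t)
    (h : ∀ m, 0 ≤ bandSeq b s m * bandSeq b t m) :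
    ∀ m, 0 ≤ bandBezoutian b s t m ∧ 0 < bandShiftedBezoutian b s t m
  | 0 => by simp [bandBezoutian, bandShiftedBezoutian]
  | 1 => by simp [bandBezoutian, bandShiftedBezoutian, hst]
  | 2 => by simp [bandBezoutian, bandShiftedBezoutian, (hb 0).le, pow_pos hst]
  | m + 3 => by
    obtain ⟨hA₀, hB₀⟩ := bandBezoutian_nonneg_and_bandShiftedBezoutian_pos hb hst h m
    obtain ⟨hA₁, hB₁⟩ := bandBezoutian_nonneg_and_bandShiftedBezoutian_pos hb hst h (m + 1)
    have hb₀ := hb m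
    have hb₁ := hb (m + 1)
    have hdiag := h (m + 3)
    rw [bandBezoutian, bandShiftedBezoutian]
    constructor <;> positivity

theorem christoffel_darboux_confluent (b : ℕ → R) {s t : R} (hst : s ^ 3 = t ^ 3) {m : ℕ}
    (ht : bandSeq b t m = 0) :
    3 * s ^ 2 * bandShiftedBezoutian b s t m =
      -(t ^ 2 * bandSeq b t (m + 1) * (derivative (bandPoly b m)).eval s) := by
  have hcomp : eval s ∘ C ∘ b = b := by ext; simp
  have hker : (bandShiftedBezoutian (C ∘ b) X (C t) m).eval s = bandShiftedBezoutian b s t m := by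
    simpa [hcomp] using (map_bandBezoutian (evalRingHom s) (C ∘ b) X (C t) m).2
  have hC (k : ℕ) : bandSeq (C ∘ b) (C t) k = C (bandSeq b t k) := (map_bandSeq C b t k).symm
  have hcd := (christoffel_darboux (C ∘ b) X (C t) m).2
  rw [hC, hC, ht, C_0, mul_zero, zero_sub, ← bandPoly] at hcd
  simpa [derivative_pow, two_add_one_eq_three, hst, hker] using congr_arg (eval s ∘ derivative) hcd

end BandSeq

theorem rootMultiplicity_eq_one_iff {R : Type*} [CommRing R] {p : R[X]} {x : R} :
    p.rootMultiplicity x = 1 ↔ p.IsRoot x ∧ ¬ (derivative p).IsRoot x := by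
  rcases eq_or_ne p 0 with rfl | hp
  · simp
  have h₀ := rootMultiplicity_pos hp (x := x)
  have h₁ := one_lt_rootMultiplicity_iff_isRoot hp (t := x)
  grind

section Roots

open scoped ComplexOrder

variable {𝕜 : Type*} [RCLike 𝕜]

theorem conj_bandSeq (b : ℕ → ℝ) (z : 𝕜) (m : ℕ) :
    starRingEnd 𝕜 (bandSeq (algebraMap ℝ 𝕜 ∘ b) z m) =
      bandSeq (algebraMap ℝ 𝕜 ∘ b) (starRingEnd 𝕜 z) m := by
  rw [map_bandSeq]
  congr 1
  ext
  simp

theorem bandShiftedBezoutian_conj_pos {b : ℕ → ℝ} (hb : ∀ m, 0 < b m) {z : 𝕜} (hz : z ≠ 0)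
    (m : ℕ) : 0 < bandShiftedBezoutian (algebraMap ℝ 𝕜 ∘ b) z (starRingEnd 𝕜 z) m := by
  refine (bandBezoutian_nonneg_and_bandShiftedBezoutian_pos (fun k => ?_) ?_ (fun k => ?_) m).2
  · simpa using hb k
  · rw [RCLike.mul_conj]
    positivity
  · rw [← conj_bandSeq]
    exact mul_star_self_nonneg _

theorem isRoot_map_bandPoly_iff {b : ℕ → ℝ} {m : ℕ} {z : 𝕜} :
    ((bandPoly b m).map (algebraMap ℝ 𝕜)).IsRoot z ↔ bandSeq (algebraMap ℝ 𝕜 ∘ b) z m = 0 := by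
  rw [map_bandPoly, IsRoot.def, eval_bandPoly]

theorem bandSeq_conj_eq_zero {b : ℕ → ℝ} {m : ℕ} {z : 𝕜}
    (hz : bandSeq (algebraMap ℝ 𝕜 ∘ b) z m = 0) :
    bandSeq (algebraMap ℝ 𝕜 ∘ b) (starRingEnd 𝕜 z) m = 0 := by
  rw [← conj_bandSeq, hz, map_zero]

theorem cube_eq_conj_cube_of_bandSeq_eq_zero {b : ℕ → ℝ} (hb : ∀ m, 0 < b m) {m : ℕ} {z : 𝕜}
    (hz₀ : z ≠ 0) (hz : bandSeq (algebraMap ℝ 𝕜 ∘ b) z m = 0) :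
    z ^ 3 = starRingEnd 𝕜 z ^ 3 := by
  have hcd := (christoffel_darboux (algebraMap ℝ 𝕜 ∘ b) z (starRingEnd 𝕜 z) m).2
  rw [hz, bandSeq_conj_eq_zero hz, mul_zero, mul_zero, sub_zero, mul_eq_zero] at hcd
  exact sub_eq_zero.1 (hcd.resolve_right (bandShiftedBezoutian_conj_pos hb hz₀ m).ne')

theorem rootMultiplicity_map_bandPoly {b : ℕ → ℝ} (hb : ∀ m, 0 < b m) {m : ℕ} {z : 𝕜}
    (hz₀ : z ≠ 0) (hz : ((bandPoly b m).map (algebraMap ℝ 𝕜)).IsRoot z) :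
    ((bandPoly b m).map (algebraMap ℝ 𝕜)).rootMultiplicity z = 1 := by
  refine rootMultiplicity_eq_one_iff.2 ⟨hz, fun hder => ?_⟩
  rw [isRoot_map_bandPoly_iff] at hz
  have hconfluent := christoffel_darboux_confluent _
    (cube_eq_conj_cube_of_bandSeq_eq_zero hb hz₀ hz) (bandSeq_conj_eq_zero hz)
  rw [← map_bandPoly, hder, mul_zero, neg_zero] at hconfluent
  simp [(bandShiftedBezoutian_conj_pos hb hz₀ m).ne', hz₀] at hconfluent

end Roots

theorem rootMultiplicity_cubeReduced {b : ℕ → ℝ} (hb : ∀ m, 0 < b m) {m : ℕ} {x : ℝ}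
    (hx : (cubeReduced b m).IsRoot x) : (cubeReduced b m).rootMultiplicity x = 1 := by
  obtain ⟨t, ht, rfl⟩ : ∃ t : ℝ, 0 < t ∧ t ^ 3 = x :=
    ⟨_, Real.rpow_pos_of_pos (pos_of_isRoot_cubeReduced hb hx) _,
      Real.rpow_inv_natCast_pow (pos_of_isRoot_cubeReduced hb hx).le three_ne_zero⟩
  have hroot : (bandPoly b m).IsRoot t := by
    simp [bandPoly_eq_X_pow_mul_comp, hx.eq_zero, eval_comp]
  have hsimple := rootMultiplicity_map_bandPoly (𝕜 := ℝ) hb ht.ne' (by simpa using hroot)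
  rw [Algebra.algebraMap_self, map_id, rootMultiplicity_eq_one_iff] at hsimple
  refine rootMultiplicity_eq_one_iff.2 ⟨hx, fun hder => hsimple.2 ?_⟩
  simp [bandPoly_eq_X_pow_mul_comp, derivative_comp, eval_comp, hx.eq_zero, hder.eq_zero]

theorem exists_pos_cube_eq_of_isRoot {b : ℕ → ℝ} (hb : ∀ m, 0 < b m) {m : ℕ} {z : ℂ} (hz₀ : z ≠ 0)
    (hz : ((bandPoly b m).map (algebraMap ℝ ℂ)).IsRoot z) : ∃ r : ℝ, 0 < r ∧ z ^ 3 = r := by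
  have hcube := cube_eq_conj_cube_of_bandSeq_eq_zero hb hz₀ (isRoot_map_bandPoly_iff.1 hz)
  obtain ⟨r, hr⟩ := Complex.conj_eq_iff_real.1 ((map_pow _ z 3).trans hcube.symm)
  refine ⟨r, pos_of_isRoot_cubeReduced hb (m := m) ?_, hr⟩
  have hP : ((cubeReduced b m).map (algebraMap ℝ ℂ)).eval (algebraMap ℝ ℂ r) = 0 := by
    simpa [bandPoly_eq_X_pow_mul_comp, Polynomial.map_comp, eval_comp, hr, hz₀] using hz
  rwa [eval_map_apply, map_eq_zero] at hP

theorem arg_of_cube_pos {z : ℂ} {r : ℝ} (hr : 0 < r) (hz : z ^ 3 = r) :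
    z.arg = 0 ∨ z.arg = 2 * Real.pi / 3 ∨ z.arg = -(2 * Real.pi / 3) := by
  have hangle : ((3 * z.arg : ℝ) : Real.Angle) = ((0 : ℝ) : Real.Angle) := by
    rw [← Nat.cast_ofNat, Real.Angle.natCast_mul_eq_nsmul, ← Complex.arg_pow_coe_angle, hz,
      Complex.arg_ofReal_of_nonneg hr.le]
  obtain ⟨k, hk⟩ := Real.Angle.angle_eq_iff_two_pi_dvd_sub.1 hangle
  have hlower := Complex.neg_pi_lt_arg z
  have hupper := Complex.arg_le_pi z
  have hpi := Real.pi_pos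
  have hk₁ : (-2 : ℝ) < k := by nlinarith
  have hk₂ : (k : ℝ) < 2 := by nlinarith
  norm_cast at hk₁ hk₂
  obtain rfl | rfl | rfl : k = 0 ∨ k = 1 ∨ k = -1 := by omega
  · left; push_cast at hk; linarith
  · right; left; push_cast at hk; linarith
  · right; right; push_cast at hk; linarith

section Hessenberg

variable {R : Type*} [CommRing R]

theorem det_mul_eq_of_mulVec_eq_single_last {n : ℕ} {M : Matrix (Fin (n + 1)) (Fin (n + 1)) R}
    (hM : ∀ i j : Fin (n + 1), (i : ℕ) + 1 < j → M i j = 0) {w : Fin (n + 1) → R} {c : R}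
    (hw : M.mulVec w = Pi.single (Fin.last n) c) :
    M.det * w 0 = (∏ i : Fin n, -M i.castSucc i.succ) * c := by
  have hminor : (M.submatrix Fin.castSucc Fin.succ).IsLowerTriangular := by
    intro i j hij
    exact hM _ _ (by simpa using hij)
  have hcramer := congr_fun (congr_arg M.adjugate.mulVec hw) 0
  simpa [Matrix.mulVec_mulVec, Matrix.adjugate_mul, Matrix.smul_mulVec,
    Matrix.adjugate_fin_succ_eq_det_submatrix, Matrix.det_of_isLowerTriangular _ hminor,
    Finset.prod_neg] using hcramer

/-- The `n × n` matrix with first superdiagonal `u` and second subdiagonal `v`, each numbered from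
its top entry; only the values `u i` with `i + 1 < n` and `v j` with `j + 2 < n` matter. -/
def bandMatrix (n : ℕ) (u v : ℕ → R) : Matrix (Fin n) (Fin n) R :=
  Matrix.of fun i j => (if (j : ℕ) = i + 1 then u i else 0) + if (i : ℕ) = j + 2 then v j else 0

theorem bandMatrix_mulVec (n : ℕ) (u v f : ℕ → R) (i : Fin n) :
    (bandMatrix n u v).mulVec (fun j => f j) i =
      (if (i : ℕ) + 1 < n then u i * f (i + 1) else 0) +
        if 2 ≤ (i : ℕ) then v (i - 2) * f (i - 2) else 0 := by
  simp only [Matrix.mulVec, dotProduct, bandMatrix, Matrix.of_apply, add_mul, ite_mul, zero_mul,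
    Finset.sum_add_distrib]
  congr 1
  · rw [Fin.sum_univ_eq_sum_range (fun j => if j = i + 1 then u i * f j else 0)]
    simp
  · rw [Fin.sum_univ_eq_sum_range (fun j => if (i : ℕ) = j + 2 then v j * f j else 0)]
    split_ifs with hi
    · rw [Finset.sum_eq_single_of_mem (i - 2 : ℕ) (Finset.mem_range.2 (by omega)) (by grind)]
      grind
    · exact Finset.sum_eq_zero (by grind)

theorem charmatrix_bandMatrix_mulVec (n : ℕ) (u v : ℕ → R) (f : ℕ → R[X]) (i : Fin n) :
    (bandMatrix n u v).charmatrix.mulVec (fun j => f j) i =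
      X * f i - ((if (i : ℕ) + 1 < n then C (u i) * f (i + 1) else 0) +
        if 2 ≤ (i : ℕ) then C (v (i - 2)) * f (i - 2) else 0) := by
  have hmap : (bandMatrix n u v).map C = bandMatrix n (C ∘ u) (C ∘ v) := by
    ext1 i j
    simp [bandMatrix, apply_ite C]
  have hband := bandMatrix_mulVec n (C ∘ u) (C ∘ v) f i
  simp_rw [Function.comp_apply] at hband
  rw [← hband, Matrix.charmatrix, RingHom.mapMatrix_apply, hmap, Matrix.sub_mulVec, Pi.sub_apply,
    Matrix.scalar_apply, Matrix.mulVec_diagonal]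

/- For `c ∈ R`, the vector with entries `bandSeq b c j / ∏ k < j, u k` solves all but the last row
of `(c • 1 - bandMatrix (n + 1) u v) w = 0`. The factors below clear its denominators. -/
theorem charmatrix_bandMatrix_mulVec_bandPoly (u v : ℕ → R) (n : ℕ) :
    (bandMatrix (n + 1) u v).charmatrix.mulVec
        (fun j => bandPoly (fun m => v m * (u m * u (m + 1))) j *
          C (∏ k ∈ Finset.Ico (j : ℕ) n, u k)) =
      Pi.single (Fin.last n) (bandPoly (fun m => v m * (u m * u (m + 1))) (n + 1)) := by
  set b : ℕ → R := fun m => v m * (u m * u (m + 1))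
  ext1 i
  rw [charmatrix_bandMatrix_mulVec (n + 1) u v
    (fun j => bandPoly b j * C (∏ k ∈ Finset.Ico j n, u k))]
  have hsub : (if 2 ≤ (i : ℕ) then C (v (i - 2)) *
        (bandPoly b (i - 2) * C (∏ k ∈ Finset.Ico (i - 2 : ℕ) n, u k)) else 0) =
      (if 2 ≤ (i : ℕ) then C (b (i - 2)) * bandPoly b (i - 2) else 0) *
        C (∏ k ∈ Finset.Ico (i : ℕ) n, u k) := by
    split_ifs with hi
    · obtain ⟨m, hm⟩ := Nat.exists_eq_add_of_le' hi
      rw [hm, Nat.add_sub_cancel, Finset.prod_eq_prod_Ico_succ_bot (by omega),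
        Finset.prod_eq_prod_Ico_succ_bot (by omega)]
      simp only [b, C_mul]
      ring
    · rw [zero_mul]
  rw [hsub, sub_add_eq_sub_sub_swap, ← mul_assoc, ← sub_mul, ← bandPoly_succ]
  rcases i.le_last.lt_or_eq with hi | rfl
  · have hin : (i : ℕ) < n := hi
    rw [Pi.single_eq_of_ne hi.ne, if_pos (by omega), Finset.prod_eq_prod_Ico_succ_bot hin, C_mul]
    ring
  · simp

theorem charpoly_bandMatrix [IsDomain R] {u : ℕ → R} (hu : ∀ i, u i ≠ 0) (v : ℕ → R) :
    ∀ n, (bandMatrix n u v).charpoly = bandPoly (fun m => v m * (u m * u (m + 1))) n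
  | 0 => by simp [bandPoly, bandSeq]
  | n + 1 => by
    have hsup (i : Fin n) :
        (bandMatrix (n + 1) u v).charmatrix i.castSucc i.succ = -C (u i) := by
      rw [Matrix.charmatrix_apply_ne _ _ _ i.castSucc_lt_succ.ne]
      simp [bandMatrix, show (i : ℕ) ≠ i + 1 + 2 by omega]
    have hlower (i j : Fin (n + 1)) (hij : (i : ℕ) + 1 < j) :
        (bandMatrix (n + 1) u v).charmatrix i j = 0 := by
      rw [Matrix.charmatrix_apply_ne _ _ _ (by omega)]
      simp [bandMatrix, show (j : ℕ) ≠ i + 1 by omega, show (i : ℕ) ≠ j + 2 by omega]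
    have hprod : C (∏ i : Fin n, u i) ≠ 0 := by
      simp [Finset.prod_ne_zero_iff, hu]
    have hdet := det_mul_eq_of_mulVec_eq_single_last hlower
      (charmatrix_bandMatrix_mulVec_bandPoly u v n)
    refine mul_right_cancel₀ hprod ?_
    rw [mul_comm (bandPoly _ _)]
    simpa [hsup, bandPoly, bandSeq, Matrix.charpoly, ← Fin.prod_univ_eq_prod_range] using hdet

end Hessenberg

theorem exists_eq_bandMatrix {R : Type*} [CommRing R] [PartialOrder R] [IsStrictOrderedRing R]
    {n : ℕ} {A : Matrix (Fin n) (Fin n) R}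
    (hsup : ∀ i j : Fin n, (j : ℕ) = (i : ℕ) + 1 → 0 < A i j)
    (hsub : ∀ i j : Fin n, (i : ℕ) = (j : ℕ) + 2 → 0 < A i j)
    (hzero : ∀ i j : Fin n, (j : ℕ) ≠ (i : ℕ) + 1 → (i : ℕ) ≠ (j : ℕ) + 2 → A i j = 0) :
    ∃ u v : ℕ → R, (∀ i, 0 < u i) ∧ (∀ i, 0 < v i) ∧ A = bandMatrix n u v := by
  refine ⟨fun i => if h : i + 1 < n then A ⟨i, by omega⟩ ⟨i + 1, h⟩ else 1,
    fun j => if h : j + 2 < n then A ⟨j + 2, h⟩ ⟨j, by omega⟩ else 1, fun i => ?_, fun j => ?_, ?_⟩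
  · grind [zero_lt_one]
  · grind
  · ext i j
    simp only [bandMatrix, Fin.eta, Matrix.of_apply]
    grind

/-- For a real n×n matrix with positive entries on the first superdiagonal and
the second subdiagonal and zeros elsewhere, the characteristic polynomial has
the form λ^k · P(λ³) with k ∈ {0,1,2}, where P is a real polynomial all of whose
roots are positive and simple. In particular, all nonzero eigenvalues are simple
with arguments of the form 2πk/3, k ∈ {0,1,2}. -/
theorem tarasov_charpoly (n : ℕ) (A : Matrix (Fin n) (Fin n) ℝ)
    (hsup : ∀ i j : Fin n, (j : ℕ) = (i : ℕ) + 1 → 0 < A i j)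
    (hsub : ∀ i j : Fin n, (i : ℕ) = (j : ℕ) + 2 → 0 < A i j)
    (hzero : ∀ i j : Fin n, (j : ℕ) ≠ (i : ℕ) + 1 → (i : ℕ) ≠ (j : ℕ) + 2 → A i j = 0) :
    (∃ k : ℕ, k ≤ 2 ∧ ∃ P : Polynomial ℝ, A.charpoly = X ^ k * P.comp (X ^ 3) ∧
      ∀ x : ℝ, P.IsRoot x → 0 < x ∧ P.rootMultiplicity x = 1) ∧
    (∀ z : ℂ, (A.charpoly.map (algebraMap ℝ ℂ)).IsRoot z → z ≠ 0 →
      (A.charpoly.map (algebraMap ℝ ℂ)).rootMultiplicity z = 1 ∧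
      (z.arg = 0 ∨ z.arg = 2 * Real.pi / 3 ∨ z.arg = -(2 * Real.pi / 3))) := by
  obtain ⟨u, v, hu, hv, rfl⟩ := exists_eq_bandMatrix hsup hsub hzero
  rw [charpoly_bandMatrix (fun i => (hu i).ne')]
  have hb (m : ℕ) : 0 < v m * (u m * u (m + 1)) := mul_pos (hv _) (mul_pos (hu _) (hu _))
  refine ⟨⟨n % 3, by omega, _, bandPoly_eq_X_pow_mul_comp _ n, fun x hx =>
    ⟨pos_of_isRoot_cubeReduced hb hx, rootMultiplicity_cubeReduced hb hx⟩⟩, fun z hz hz₀ => ?_⟩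
  obtain ⟨r, hr, hzr⟩ := exists_pos_cube_eq_of_isRoot hb hz₀ hz
  exact ⟨rootMultiplicity_map_bandPoly hb hz₀ hz, arg_of_cube_pos hr hzr⟩
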